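/- arXiv:1402.3450 — 2 statements merged into one kernel-verified Lean document; each statement's English description precedes it below -/
import Mathlib

section
/- For every k ≥ 2, the following P_k-Flip game shows that the stretch bound k+1 is tight: the game has k players controlling variables x_1, ..., x_k (no frozen variables), one unit-weight clause over all k variables that is satisfied iff the number of variables with value true is either zero or has the same parity as k, and k additional unit-weight clauses where the i-th such clause contains only x_i and is satisfied iff x_i is false. In this game, the all-true state is a pure Nash equilibrium with potential 1, and the all-false state is a pure Nash equilibrium with potential k+1. -/
/-! The game has utility `u_j(S) = [parity clause holds at S] + [S j = false]`.
At the all-true state the parity clause holds (`k` variables are true), and a player who flips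
gains her own clause but breaks the parity clause, because `k - 1 ≥ 1` variables are then true;
so her utility stays `1`. At the all-false state every clause is satisfied, hence nobody can gain.
The flip property of the parity clause holds because a flip changes the number of true variables
by exactly one (`numTrue_flip`). -/

/-- A `P_k`-Flip game: boolean variables `V`, player-controlled variables `N ⊆ V`
(variables outside `N` are frozen), and clauses `C` with nonnegative weights,
at most `k` variables each, satisfaction predicates depending only on their own
variables, and the flip property: an unsatisfied clause becomes satisfied when
any one of its variables is flipped. -/
structure PkFlipGame (V C : Type) [Fintype V] [DecidableEq V] [Fintype C] (k : ℕ) where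
  /-- the player-controlled variables -/
  N : Finset V
  /-- frozen values for the variables outside `N` -/
  frozen : V → Bool
  /-- clause weights -/
  w : C → ℝ
  w_nonneg : ∀ c, 0 ≤ w c
  /-- the variables of each clause -/
  vars : C → Finset V
  vars_card_le : ∀ c, (vars c).card ≤ k
  /-- the satisfaction predicate of each clause -/
  sat : C → (V → Bool) → Bool
  sat_depends : ∀ c (S S' : V → Bool), (∀ v ∈ vars c, S v = S' v) → sat c S = sat c S'
  flip_sat : ∀ c (S : V → Bool) (j : V), j ∈ vars c → sat c S = false →
    sat c (Function.update S j (!S j)) = true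

variable {V C : Type} [Fintype V] [DecidableEq V] [Fintype C] {k : ℕ}

/-- The state obtained from `S` by flipping the value of variable `j`. -/
def flipVar (S : V → Bool) (j : V) : V → Bool := Function.update S j (!S j)

namespace PkFlipGame

/-- A state of the game: agrees with the frozen values outside `N`. -/
def IsState (G : PkFlipGame V C k) (S : V → Bool) : Prop :=
  ∀ v, v ∉ G.N → S v = G.frozen v

/-- Utility of player `j`: total weight of satisfied clauses containing `j`'s variable. -/
def util (G : PkFlipGame V C k) (j : V) (S : V → Bool) : ℝ :=
  ∑ c ∈ Finset.univ.filter (fun c => j ∈ G.vars c ∧ G.sat c S = true), G.w c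

/-- The potential: total weight of satisfied clauses. -/
def potential (G : PkFlipGame V C k) (S : V → Bool) : ℝ :=
  ∑ c ∈ Finset.univ.filter (fun c => G.sat c S = true), G.w c

/-- Maximum possible utility `U_j` of player `j`: total weight of clauses containing `j`. -/
def maxUtil (G : PkFlipGame V C k) (j : V) : ℝ :=
  ∑ c ∈ Finset.univ.filter (fun c => j ∈ G.vars c), G.w c

/-- The subgame potential `Φ_R`: total weight of satisfied clauses containing a
variable of some player in `R`. -/
def subPotential (G : PkFlipGame V C k) (R : Finset V) (S : V → Bool) : ℝ :=
  ∑ c ∈ Finset.univ.filter (fun c => G.sat c S = true ∧ ∃ j ∈ R, j ∈ G.vars c), G.w c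

/-- A `ρ`-approximate pure Nash equilibrium: a state where no player can increase
her utility by more than a factor `ρ` by flipping her variable. -/
def IsApproxEquilibrium (G : PkFlipGame V C k) (ρ : ℝ) (S : V → Bool) : Prop :=
  G.IsState S ∧ ∀ j ∈ G.N, G.util j (flipVar S j) ≤ ρ * G.util j S

/-- A pure Nash equilibrium: no player can strictly increase her utility. -/
def IsPNE (G : PkFlipGame V C k) (S : V → Bool) : Prop :=
  G.IsState S ∧ ∀ j ∈ G.N, G.util j (flipVar S j) ≤ G.util j S

end PkFlipGame

/-- The number of true variables at a state. -/
def numTrue {k : ℕ} (S : Fin k → Bool) : ℕ := (Finset.univ.filter (fun v => S v = true)).card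

lemma numTrue_flip {k : ℕ} (S : Fin k → Bool) (j : Fin k) :
    numTrue (flipVar S j) + (if S j then 1 else 0) = numTrue S + (if S j then 0 else 1) := by
  have hrest : ∑ v ∈ Finset.univ.erase j, (if flipVar S j v = true then 1 else 0)
      = ∑ v ∈ Finset.univ.erase j, (if S v = true then 1 else 0) := by
    refine Finset.sum_congr rfl fun v hv => ?_
    simp [flipVar, Function.update_of_ne (Finset.ne_of_mem_erase hv)]
  simp only [numTrue, Finset.card_filter]
  rw [← Finset.add_sum_erase _ _ (Finset.mem_univ j), hrest,
    ← Finset.add_sum_erase _ (fun v => if S v = true then 1 else 0) (Finset.mem_univ j)]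
  cases h : S j <;> simp [flipVar, h] <;> omega

/-- The tight game: clause `none` is the parity clause over all variables, clause `some i` is the
clause containing only variable `i`. -/
def tightGame (k : ℕ) (hk : 2 ≤ k) : PkFlipGame (Fin k) (Option (Fin k)) k where
  N := Finset.univ
  frozen := fun _ => false
  w := fun _ => 1
  w_nonneg := fun _ => zero_le_one
  vars := fun c => c.elim Finset.univ fun i => {i}
  vars_card_le := by
    rintro (_ | i)
    · simp
    · simp; omega
  sat := fun c S => c.elim (decide (numTrue S = 0 ∨ numTrue S % 2 = k % 2)) fun i => !S i
  sat_depends := by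
    rintro (_ | i) S S' h
    · have : S = S' := funext fun v => h v (by simp)
      rw [this]
    · simp [h i (by simp)]
  flip_sat := by
    rintro (_ | i) S j hj h
    · have hflip := numTrue_flip S j
      simp only [Option.elim_none, decide_eq_false_iff_not, decide_eq_true_eq] at h ⊢
      change numTrue (flipVar S j) = 0 ∨ numTrue (flipVar S j) % 2 = k % 2
      split_ifs at hflip <;> omega
    · have hij : j = i := by simpa using hj
      subst hij
      simpa using h

lemma tightGame_util {k : ℕ} (hk : 2 ≤ k) (j : Fin k) (S : Fin k → Bool) :
    (tightGame k hk).util j S =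
      (if numTrue S = 0 ∨ numTrue S % 2 = k % 2 then 1 else 0) + (if S j then 0 else 1) := by
  rw [PkFlipGame.util, Finset.sum_filter, Fintype.sum_option, Finset.sum_eq_single j]
  · cases h : S j <;> simp [tightGame, h]
  · intro i _ hi
    simp [tightGame, hi.symm]
  · simp

lemma tightGame_potential {k : ℕ} (hk : 2 ≤ k) (S : Fin k → Bool) :
    (tightGame k hk).potential S =
      (if numTrue S = 0 ∨ numTrue S % 2 = k % 2 then 1 else 0)
        + ∑ i, (if S i then 0 else 1) := by
  rw [PkFlipGame.potential, Finset.sum_filter, Fintype.sum_option]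
  congr 1
  · simp [tightGame]
  · refine Finset.sum_congr rfl fun i _ => ?_
    cases h : S i <;> simp [tightGame, h]

lemma numTrue_true (k : ℕ) : numTrue (fun _ : Fin k => true) = k := by simp [numTrue]

lemma numTrue_false (k : ℕ) : numTrue (fun _ : Fin k => false) = 0 := by simp [numTrue]

/-- Tightness of the stretch bound `k+1` for `P_k`-Flip games: for every `k ≥ 2`
there is a `P_k`-Flip game with `k` players `x_1, …, x_k` (no frozen variables),
a unit-weight clause over all variables satisfied iff the number of true
variables is zero or has the same parity as `k`, and `k` unit-weight clauses
where the `i`-th contains only `x_i` and is satisfied iff `x_i` is false. The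
all-true state is a pure Nash equilibrium with potential `1`, and the all-false
state is a pure Nash equilibrium with potential `k+1`. -/
theorem pkFlip_stretch_tight (k : ℕ) (hk : 2 ≤ k) :
    ∃ G : PkFlipGame (Fin k) (Option (Fin k)) k,
      G.N = Finset.univ ∧
      (∀ c, G.w c = 1) ∧
      G.vars none = Finset.univ ∧
      (∀ i, G.vars (some i) = {i}) ∧
      (∀ S : Fin k → Bool, G.sat none S = true ↔
        ((Finset.univ.filter (fun v => S v = true)).card = 0 ∨
          (Finset.univ.filter (fun v => S v = true)).card % 2 = k % 2)) ∧
      (∀ i (S : Fin k → Bool), G.sat (some i) S = true ↔ S i = false) ∧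
      G.IsPNE (fun _ => true) ∧ G.potential (fun _ => true) = 1 ∧
      G.IsPNE (fun _ => false) ∧ G.potential (fun _ => false) = (k : ℝ) + 1 := by
  refine ⟨tightGame k hk, rfl, fun _ => rfl, rfl, fun _ => rfl, fun S => ?_, fun i S => ?_,
    ⟨fun v hv => absurd (Finset.mem_univ v) hv, fun j _ => ?_⟩, ?_,
    ⟨fun v hv => absurd (Finset.mem_univ v) hv, fun j _ => ?_⟩, ?_⟩
  · simp [tightGame, numTrue]
  · simp [tightGame]
  · have hflip := numTrue_flip (fun _ : Fin k => true) j
    rw [numTrue_true] at hflip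
    -- `k - 1` is nonzero since `2 ≤ k`, and it has the wrong parity
    have hbroken : ¬ (numTrue (flipVar (fun _ : Fin k => true) j) = 0 ∨
        numTrue (flipVar (fun _ : Fin k => true) j) % 2 = k % 2) := by
      simp only [if_true] at hflip
      omega
    rw [tightGame_util, tightGame_util, if_neg hbroken, numTrue_true]
    simp [flipVar]
  · rw [tightGame_potential, numTrue_true]
    simp
  · rw [tightGame_util, tightGame_util, numTrue_false]
    simp only [true_or, if_true]
    refine add_le_add ?_ ?_ <;> split_ifs <;> simp_all
  · rw [tightGame_potential, numTrue_false]
    simp [add_comm]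
end

section
/- In every P_k-Flip game, if a player j ∈ N makes an improvement move at state S, i.e., u_j(S_{-j}) > u_j(S), then her utility after the move satisfies u_j(S_{-j}) ≥ U_j/2. -/
variable {V C : Type} [Fintype V] [DecidableEq V] [Fintype C] {k : ℕ}

theorem PkFlipGame.maxUtil_le_util_add_util_flipVar {V C : Type} [Fintype V] [DecidableEq V]
    [Fintype C] {k : ℕ} (G : PkFlipGame V C k) (j : V) (S : V → Bool) :
    G.maxUtil j ≤ G.util j S + G.util j (flipVar S j) := by
  unfold PkFlipGame.maxUtil PkFlipGame.util
  simp only [Finset.sum_filter]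
  rw [← Finset.sum_add_distrib]
  refine Finset.sum_le_sum fun c _ => ?_
  have hw := G.w_nonneg c
  by_cases hc : j ∈ G.vars c
  · cases hs : G.sat c S with
    | false =>
      have hflip : G.sat c (flipVar S j) = true := G.flip_sat c S j hc hs
      simp [hc, hflip]
    | true =>
      simp only [hc, true_and, if_true]
      split_ifs <;> linarith
  · simp [hc]

/-- In every `P_k`-Flip game, if a player `j ∈ N` makes an improvement move at a
state `S` (i.e., `u_j(S_{-j}) > u_j(S)`), then her utility after the move is at
least `U_j / 2`. -/
theorem pkFlip_improvement_half_maxUtil {V C : Type} [Fintype V] [DecidableEq V] [Fintype C]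
    (k : ℕ) (hk : 2 ≤ k)
    (G : PkFlipGame V C k) (j : V) (hj : j ∈ G.N)
    (S : V → Bool) (hS : G.IsState S)
    (himp : G.util j S < G.util j (flipVar S j)) :
    G.maxUtil j / 2 ≤ G.util j (flipVar S j) := by
  have h := G.maxUtil_le_util_add_util_flipVar j S
  linarith
end
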